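/- Let k ≥ 1, β ∈ (0, min(2,k)), and S(t,x) the heat kernel on ℝ^k. There exists a constant C > 0 such that for all t ≥ 0, δ ≥ 0 and x ∈ ℝ^k, ∫_0^t dr ∫_{ℝ^k} dz ∫_{ℝ^k} dv ‖z-v‖^{-β} |S(r+δ, x-z) - S(r, x-z)| · |S(r+δ, x-v) - S(r, x-v)| ≤ C δ^{(2-β)/2}. -/

import Mathlib

open Real MeasureTheory

noncomputable def heatKernel (k : ℕ) (t : ℝ) (x : EuclideanSpace ℝ (Fin k)) : ℝ :=
  (2 * Real.pi * t) ^ (-(k : ℝ) / 2) * Real.exp (-‖x‖ ^ 2 / (2 * t))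

/-!
For `0 < r ≤ s` the increment `|S(s, ·) - S(r, ·)|` is at most `1 - r / s` times a fixed combination
of `S(r, ·)` and `S(2s, ·)`; the doubled time absorbs the factor `‖y‖² / s` that a time derivative
produces. The Riesz potential of `S(a, ·)` is `O(a ^ (-β / 2))` uniformly in space, because
`‖w‖ ^ (-β)` is at most `a ^ (-β / 2)` off the ball of radius `√a` and has integral of order
`a ^ ((k - β) / 2)` over it, where `S(a, ·) ≤ (2πa) ^ (-k / 2)`. With `s = r + δ`, the double space
integral is therefore `O((δ / (r + δ))² r ^ (-β / 2))`, and splitting the integral over `r` at `δ`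
gives `δ ^ (1 - β / 2)`.
-/

section HeatKernel

variable {k : ℕ} {r s t : ℝ}

lemma heatKernel_nonneg (ht : 0 ≤ t) (y : EuclideanSpace ℝ (Fin k)) : 0 ≤ heatKernel k t y := by
  unfold heatKernel
  positivity

lemma heatKernel_le_rpow (ht : 0 ≤ t) (y : EuclideanSpace ℝ (Fin k)) :
    heatKernel k t y ≤ (2 * π * t) ^ (-(k : ℝ) / 2) := by
  have hexp : exp (-‖y‖ ^ 2 / (2 * t)) ≤ 1 :=
    exp_le_one_iff.2 (div_nonpos_of_nonpos_of_nonneg (by simp) (by positivity))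
  exact mul_le_of_le_one_right (by positivity) hexp

lemma measurable_heatKernel : Measurable (heatKernel k t) := by
  unfold heatKernel
  fun_prop

lemma integral_heatKernel (ht : 0 < t) : ∫ y, heatKernel k t y = 1 := by
  have hgauss := GaussianFourier.integral_rexp_neg_mul_sq_norm
    (V := EuclideanSpace ℝ (Fin k)) (b := (2 * t)⁻¹) (by positivity)
  have hbase : π / (2 * t)⁻¹ = 2 * π * t := by field_simp
  have hexp (y : EuclideanSpace ℝ (Fin k)) : -‖y‖ ^ 2 / (2 * t) = -(2 * t)⁻¹ * ‖y‖ ^ 2 := by ring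
  simp only [heatKernel, hexp]
  rw [integral_const_mul, hgauss, hbase, finrank_euclideanSpace_fin, neg_div,
    ← rpow_add (by positivity), neg_add_cancel, rpow_zero]

lemma integrable_heatKernel (ht : 0 < t) : Integrable (heatKernel k t) :=
  .of_integral_ne_zero (by rw [integral_heatKernel ht]; exact one_ne_zero)

lemma rpow_mul_heatKernel_le (hr : 0 < r) (hrs : r ≤ s) (y : EuclideanSpace ℝ (Fin k)) :
    (r / s) ^ ((k : ℝ) / 2) * heatKernel k r y ≤ heatKernel k s y := by
  have hs : 0 < s := hr.trans_le hrs
  have hprefactor : (r / s) ^ ((k : ℝ) / 2) * (2 * π * r) ^ (-(k : ℝ) / 2) =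
      (2 * π * s) ^ (-(k : ℝ) / 2) := by
    rw [neg_div, rpow_neg (by positivity), rpow_neg (by positivity), ← div_eq_mul_inv,
      ← div_rpow (by positivity) (by positivity), ← inv_rpow (by positivity)]
    congr 1
    field_simp
  rw [heatKernel, heatKernel, ← mul_assoc, hprefactor]
  simp only [neg_div]
  gcongr

lemma heatKernel_sub_le_left (hr : 0 < r) (hrs : r ≤ s) (y : EuclideanSpace ℝ (Fin k)) :
    heatKernel k r y - heatKernel k s y ≤ (1 - r / s) * (k * heatKernel k r y) := by
  have hs : 0 < s := hr.trans_le hrs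
  have hratio : r / s ≤ 1 := (div_le_one hs).2 hrs
  have hbernoulli : 1 - k * (1 - r / s) ≤ (r / s) ^ ((k : ℝ) / 2) :=
    calc 1 - k * (1 - r / s) = 1 + k * (r / s - 1) := by ring
      _ ≤ (r / s) ^ k := one_add_mul_sub_le_pow (by linarith [div_pos hr hs]) k
      _ = (r / s) ^ (k : ℝ) := (rpow_natCast _ _).symm
      _ ≤ (r / s) ^ ((k : ℝ) / 2) :=
        rpow_le_rpow_of_exponent_ge (by positivity) hratio (half_le_self k.cast_nonneg)
  have := mul_le_mul_of_nonneg_right hbernoulli (heatKernel_nonneg hr.le y)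
  linarith [rpow_mul_heatKernel_le hr hrs y]

lemma exp_neg_mul_sub_exp_neg_le {u b : ℝ} (hu₀ : 0 ≤ u) (hu₁ : u ≤ 1) :
    exp (-(u * b)) - exp (-b) ≤ (1 - u) * (2 * exp (-(u * b) / 2)) := by
  set d := 1 - exp (-((1 - u) * b)) with hd
  have hd_one : d ≤ 1 := by linarith [exp_pos (-((1 - u) * b))]
  have hd_lin : d ≤ (1 - u) * b := by linarith [add_one_le_exp (-((1 - u) * b))]
  -- Weighting the two bounds on `d` by `1 - u` and `u` avoids separating small from large `u`.
  have hd_le : d ≤ (1 - u) * (1 + u * b) := by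
    linarith [mul_le_mul_of_nonneg_left hd_one (sub_nonneg.2 hu₁),
      mul_le_mul_of_nonneg_left hd_lin hu₀]
  have hhalf : (1 + u * b) * exp (-(u * b) / 2) ≤ 2 := by
    have hlin : 1 + u * b ≤ 2 * exp (u * b / 2) := by linarith [add_one_le_exp (u * b / 2)]
    calc (1 + u * b) * exp (-(u * b) / 2) ≤ 2 * exp (u * b / 2) * exp (-(u * b) / 2) := by gcongr
      _ = 2 := by rw [mul_assoc, ← exp_add, neg_div, add_neg_cancel, exp_zero, mul_one]
  calc exp (-(u * b)) - exp (-b)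
      = d * exp (-(u * b)) := by rw [hd, sub_mul, ← exp_add]; ring_nf
    _ ≤ (1 - u) * (1 + u * b) * exp (-(u * b)) := by gcongr
    _ = (1 - u) * (((1 + u * b) * exp (-(u * b) / 2)) * exp (-(u * b) / 2)) := by
      rw [mul_assoc, mul_assoc (1 + u * b), ← exp_add, add_halves]
    _ ≤ (1 - u) * (2 * exp (-(u * b) / 2)) := by
      have := sub_nonneg.2 hu₁
      gcongr

lemma heatKernel_sub_le_right (hr : 0 < r) (hrs : r ≤ s) (y : EuclideanSpace ℝ (Fin k)) :
    heatKernel k s y - heatKernel k r y ≤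
      (1 - r / s) * (2 * 2 ^ ((k : ℝ) / 2) * heatKernel k (2 * s) y) := by
  have hs : 0 < s := hr.trans_le hrs
  have hprefactor : (2 * π * s) ^ (-(k : ℝ) / 2) ≤ (2 * π * r) ^ (-(k : ℝ) / 2) :=
    rpow_le_rpow_of_nonpos (by positivity) (by gcongr) (by rw [neg_div, neg_nonpos]; positivity)
  have hexp := exp_neg_mul_sub_exp_neg_le (u := r / s) (b := ‖y‖ ^ 2 / (2 * r)) (by positivity)
    ((div_le_one hs).2 hrs)
  have hscale : r / s * (‖y‖ ^ 2 / (2 * r)) = ‖y‖ ^ 2 / (2 * s) := by field_simp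
  rw [hscale, ← neg_div, ← neg_div] at hexp
  have hdouble : (2 * π * s) ^ (-(k : ℝ) / 2) =
      2 ^ ((k : ℝ) / 2) * (2 * π * (2 * s)) ^ (-(k : ℝ) / 2) := by
    rw [mul_left_comm _ 2 s, mul_rpow (x := 2) (by positivity) (by positivity), neg_div,
      ← mul_assoc, ← rpow_add two_pos, add_neg_cancel, rpow_zero, one_mul]
  calc heatKernel k s y - heatKernel k r y
      ≤ (2 * π * s) ^ (-(k : ℝ) / 2) *
          (exp (-‖y‖ ^ 2 / (2 * s)) - exp (-‖y‖ ^ 2 / (2 * r))) := by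
        rw [heatKernel, heatKernel, mul_sub]
        gcongr
    _ ≤ (2 * π * s) ^ (-(k : ℝ) / 2) *
          ((1 - r / s) * (2 * exp (-‖y‖ ^ 2 / (2 * s) / 2))) := by gcongr
    _ = (1 - r / s) * (2 * 2 ^ ((k : ℝ) / 2) * heatKernel k (2 * s) y) := by
        rw [hdouble, heatKernel, div_div, mul_comm (2 * s) 2]
        ring

lemma abs_heatKernel_sub_le (hr : 0 < r) (hrs : r ≤ s) (y : EuclideanSpace ℝ (Fin k)) :
    |heatKernel k s y - heatKernel k r y| ≤
      (1 - r / s) * (k * heatKernel k r y + 2 * 2 ^ ((k : ℝ) / 2) * heatKernel k (2 * s) y) := by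
  have hs : 0 < s := hr.trans_le hrs
  have hfactor : 0 ≤ 1 - r / s := sub_nonneg.2 ((div_le_one hs).2 hrs)
  have hleft : 0 ≤ (1 - r / s) * (k * heatKernel k r y) :=
    mul_nonneg hfactor (mul_nonneg k.cast_nonneg (heatKernel_nonneg hr.le y))
  have hright : 0 ≤ (1 - r / s) * (2 * 2 ^ ((k : ℝ) / 2) * heatKernel k (2 * s) y) :=
    mul_nonneg hfactor (mul_nonneg (by positivity) (heatKernel_nonneg (by positivity) y))
  rw [abs_le]
  constructor <;> linarith [heatKernel_sub_le_left hr hrs y, heatKernel_sub_le_right hr hrs y]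

end HeatKernel

section RieszPotential

variable {E : Type*} [NormedAddCommGroup E] [MeasurableSpace E] {μ : Measure E} {β : ℝ}

/-- The energy `∬ ‖z - v‖ ^ (-β) f(z) f(v)` of the density `f` for the Riesz kernel of exponent `β`,
as an iterated Bochner integral. -/
noncomputable def rieszEnergy (μ : Measure E) (β : ℝ) (f : E → ℝ) : ℝ :=
  ∫ z, ∫ v, ‖z - v‖ ^ (-β) * f z * f v ∂μ ∂μ

/-- The Riesz potential `z ↦ ∫ ‖z - v‖ ^ (-β) f(v)` of the density `f` is at most `M` everywhere.
Integrability is part of the notion, since the Bochner integral of a non-integrable function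
is `0`. -/
def RieszPotentialLE (μ : Measure E) (β : ℝ) (f : E → ℝ) (M : ℝ) : Prop :=
  ∀ z, Integrable (fun v ↦ ‖z - v‖ ^ (-β) * f v) μ ∧ ∫ v, ‖z - v‖ ^ (-β) * f v ∂μ ≤ M

lemma rieszEnergy_nonneg {f : E → ℝ} (hf : ∀ v, 0 ≤ f v) : 0 ≤ rieszEnergy μ β f :=
  integral_nonneg fun z ↦ integral_nonneg fun v ↦
    mul_nonneg (mul_nonneg (by positivity) (hf z)) (hf v)

namespace RieszPotentialLE

variable {f g : E → ℝ} {M N : ℝ}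

lemma add (hf : RieszPotentialLE μ β f M) (hg : RieszPotentialLE μ β g N) :
    RieszPotentialLE μ β (fun v ↦ f v + g v) (M + N) := by
  intro z
  obtain ⟨hfi, hfM⟩ := hf z
  obtain ⟨hgi, hgN⟩ := hg z
  simp only [mul_add]
  exact ⟨hfi.add hgi, (integral_add hfi hgi).trans_le (add_le_add hfM hgN)⟩

lemma const_mul {c : ℝ} (hc : 0 ≤ c) (hf : RieszPotentialLE μ β f M) :
    RieszPotentialLE μ β (fun v ↦ c * f v) (c * M) := by
  intro z
  obtain ⟨hfi, hfM⟩ := hf z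
  simp only [mul_left_comm _ c]
  exact ⟨hfi.const_mul c, (integral_const_mul c _).trans_le (mul_le_mul_of_nonneg_left hfM hc)⟩

lemma mono (hf : RieszPotentialLE μ β f M) (hMN : M ≤ N) : RieszPotentialLE μ β f N :=
  fun z ↦ ⟨(hf z).1, (hf z).2.trans hMN⟩

lemma rieszEnergy_le (hg : RieszPotentialLE μ β g M) (hgi : Integrable g μ) (hM : 0 ≤ M)
    (hf : ∀ v, 0 ≤ f v) (hfg : ∀ v, f v ≤ g v) :
    rieszEnergy μ β f ≤ M * ∫ v, g v ∂μ := by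
  have hkernel (z v : E) : 0 ≤ ‖z - v‖ ^ (-β) * f z * f v :=
    mul_nonneg (mul_nonneg (by positivity) (hf z)) (hf v)
  have hinner (z : E) : ∫ v, ‖z - v‖ ^ (-β) * f z * f v ∂μ ≤ M * g z := by
    obtain ⟨hpot, hpotM⟩ := hg z
    calc ∫ v, ‖z - v‖ ^ (-β) * f z * f v ∂μ
        ≤ ∫ v, f z * (‖z - v‖ ^ (-β) * g v) ∂μ := by
          refine integral_mono_of_nonneg (.of_forall (hkernel z)) (hpot.const_mul _)
            (.of_forall fun v ↦ ?_)
          have := hf z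
          have := hfg v
          dsimp only
          rw [mul_comm _ (f z), mul_assoc]
          gcongr
      _ = f z * ∫ v, ‖z - v‖ ^ (-β) * g v ∂μ := integral_const_mul _ _
      _ ≤ f z * M := mul_le_mul_of_nonneg_left hpotM (hf z)
      _ ≤ M * g z := by rw [mul_comm]; exact mul_le_mul_of_nonneg_left (hfg z) hM
  exact (integral_mono_of_nonneg (.of_forall fun z ↦ integral_nonneg (hkernel z))
    (hgi.const_mul M) (.of_forall hinner)).trans_eq (integral_const_mul _ _)

end RieszPotentialLE

variable [NormedSpace ℝ E] [FiniteDimensional ℝ E] [BorelSpace E] [μ.IsAddHaarMeasure]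

lemma integrableOn_ball_norm_rpow_neg (hdim : 1 ≤ Module.finrank ℝ E)
    (hβ : β < Module.finrank ℝ E) (ρ : ℝ) :
    IntegrableOn (fun w : E ↦ ‖w‖ ^ (-β)) (Metric.ball 0 ρ) μ := by
  have hmeas : Measurable fun w : E ↦ ‖w‖ ^ (-β) := measurable_norm.pow_const _
  refine integrableOn_ball_of_norm_le_rpow (C := 1) hdim hβ (.of_forall fun w ↦ ?_)
    hmeas.aestronglyMeasurable
  rw [one_mul, norm_of_nonneg (by positivity)]

lemma setIntegral_ball_norm_rpow {ρ : ℝ} (hρ : 0 < ρ) (p : ℝ) :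
    ∫ w in Metric.ball (0 : E) ρ, ‖w‖ ^ p ∂μ =
      ρ ^ (Module.finrank ℝ E + p) * ∫ w in Metric.ball (0 : E) 1, ‖w‖ ^ p ∂μ := by
  have hscale := Measure.setIntegral_comp_smul_of_pos μ (fun w : E ↦ ‖w‖ ^ p) (Metric.ball 0 1) hρ
  simp only [norm_smul, norm_of_nonneg hρ.le, mul_rpow hρ.le (norm_nonneg _), integral_const_mul,
    smul_unitBall_of_pos hρ, smul_eq_mul] at hscale
  rw [rpow_add hρ, rpow_natCast, mul_assoc, hscale, mul_inv_cancel_left₀ (by positivity)]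

end RieszPotential

section HeatRieszPotential

variable {k : ℕ} {β : ℝ}

lemma norm_rpow_neg_mul_heatKernel_le (hβ : 0 ≤ β) {a : ℝ} (ha : 0 < a)
    (w y : EuclideanSpace ℝ (Fin k)) :
    ‖w‖ ^ (-β) * heatKernel k a y ≤
      (2 * π * a) ^ (-(k : ℝ) / 2) * (Metric.ball 0 √a).indicator (fun w ↦ ‖w‖ ^ (-β)) w +
        a ^ (-(β / 2)) * heatKernel k a y := by
  have hheat := heatKernel_nonneg (k := k) ha.le y
  by_cases hw : w ∈ Metric.ball 0 √a
  · rw [Set.indicator_of_mem hw, mul_comm]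
    have := heatKernel_le_rpow (k := k) ha.le y
    exact le_add_of_le_of_nonneg (by gcongr) (by positivity)
  · have hnorm : √a ≤ ‖w‖ := by simpa using hw
    have hsqrt : √a ^ (-β) = a ^ (-(β / 2)) := by
      rw [sqrt_eq_rpow, ← rpow_mul ha.le]
      ring_nf
    rw [Set.indicator_of_notMem hw, mul_zero, zero_add, ← hsqrt]
    exact mul_le_mul_of_nonneg_right
      (rpow_le_rpow_of_nonpos (sqrt_pos.2 ha) hnorm (neg_nonpos.2 hβ)) hheat

lemma rpow_mul_setIntegral_ball_sqrt_norm_rpow_neg {a : ℝ} (ha : 0 < a) :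
    (2 * π * a) ^ (-(k : ℝ) / 2) *
        ∫ w in Metric.ball (0 : EuclideanSpace ℝ (Fin k)) √a, ‖w‖ ^ (-β) =
      (2 * π) ^ (-(k : ℝ) / 2) *
        (∫ w in Metric.ball (0 : EuclideanSpace ℝ (Fin k)) 1, ‖w‖ ^ (-β)) * a ^ (-(β / 2)) := by
  have hpow : (2 * π * a) ^ (-(k : ℝ) / 2) * √a ^ (k + -β) =
      (2 * π) ^ (-(k : ℝ) / 2) * a ^ (-(β / 2)) := by
    rw [mul_rpow (by positivity) ha.le, sqrt_eq_rpow, ← rpow_mul ha.le, mul_assoc, ← rpow_add ha]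
    ring_nf
  rw [setIntegral_ball_norm_rpow (sqrt_pos.2 ha), finrank_euclideanSpace_fin, ← mul_assoc, hpow,
    mul_right_comm]

lemma exists_rieszPotentialLE_heatKernel (hβ : 0 ≤ β) (hβk : β < k) :
    ∃ K, 0 < K ∧ ∀ a, 0 < a → ∀ x : EuclideanSpace ℝ (Fin k),
      RieszPotentialLE volume β (fun v ↦ heatKernel k a (x - v)) (K * a ^ (-(β / 2))) := by
  refine ⟨(2 * π) ^ (-(k : ℝ) / 2) *
    (∫ w in Metric.ball (0 : EuclideanSpace ℝ (Fin k)) 1, ‖w‖ ^ (-β)) + 1, by positivity,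
    fun a ha x z ↦ ?_⟩
  have hdim : 0 < k := Nat.cast_pos.1 (hβ.trans_lt hβk)
  have hball : IntegrableOn (fun w : EuclideanSpace ℝ (Fin k) ↦ ‖w‖ ^ (-β)) (Metric.ball 0 √a) :=
    integrableOn_ball_norm_rpow_neg (by simpa) (by simpa) _
  have hnear := ((hball.integrable_indicator measurableSet_ball).comp_sub_left z).const_mul
    ((2 * π * a) ^ (-(k : ℝ) / 2))
  have hfar := ((integrable_heatKernel (k := k) ha).comp_sub_left x).const_mul (a ^ (-(β / 2)))
  have hbound (v : EuclideanSpace ℝ (Fin k)) :=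
    norm_rpow_neg_mul_heatKernel_le hβ ha (z - v) (x - v)
  have hint : Integrable fun v ↦ ‖z - v‖ ^ (-β) * heatKernel k a (x - v) := by
    have hmeas := measurable_heatKernel (k := k) (t := a)
    refine (hnear.add hfar).mono' (by fun_prop) (.of_forall fun v ↦ ?_)
    rw [norm_of_nonneg (mul_nonneg (by positivity) (heatKernel_nonneg ha.le _))]
    exact hbound v
  refine ⟨hint, (integral_mono hint (hnear.add hfar) hbound).trans_eq ?_⟩
  simp only [Pi.add_apply]
  rw [integral_add hnear hfar, integral_const_mul, integral_const_mul,
    integral_sub_left_eq_self (heatKernel k a), integral_heatKernel ha,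
    integral_sub_left_eq_self ((Metric.ball 0 √a).indicator _),
    integral_indicator measurableSet_ball, rpow_mul_setIntegral_ball_sqrt_norm_rpow_neg ha,
    mul_one, add_one_mul]

lemma rieszEnergy_heatKernel_sub_le (hβ : 0 ≤ β) {K : ℝ} (hK : 0 ≤ K)
    {x : EuclideanSpace ℝ (Fin k)}
    (hpot : ∀ a, 0 < a →
      RieszPotentialLE volume β (fun v ↦ heatKernel k a (x - v)) (K * a ^ (-(β / 2))))
    {r s : ℝ} (hr : 0 < r) (hrs : r ≤ s) :
    rieszEnergy volume β (fun z ↦ |heatKernel k s (x - z) - heatKernel k r (x - z)|) ≤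
      K * (k + 2 * 2 ^ ((k : ℝ) / 2)) ^ 2 * ((1 - r / s) ^ 2 * r ^ (-(β / 2))) := by
  have hs : 0 < 2 * s := by linarith
  have hfactor : 0 ≤ 1 - r / s := sub_nonneg.2 ((div_le_one (by linarith)).2 hrs)
  set A : ℝ := 2 * 2 ^ ((k : ℝ) / 2)
  have hA : 0 ≤ A := by positivity
  have hpow : (2 * s) ^ (-(β / 2)) ≤ r ^ (-(β / 2)) :=
    rpow_le_rpow_of_nonpos hr (by linarith) (by linarith)
  have hpot_r := (hpot r hr).const_mul k.cast_nonneg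
  have hpot_s := ((hpot (2 * s) hs).mono (mul_le_mul_of_nonneg_left hpow hK)).const_mul hA
  have hint_r := ((integrable_heatKernel hr).comp_sub_left x).const_mul (k : ℝ)
  have hint_s := ((integrable_heatKernel hs).comp_sub_left x).const_mul A
  calc rieszEnergy volume β (fun z ↦ |heatKernel k s (x - z) - heatKernel k r (x - z)|)
      ≤ (1 - r / s) * (k * (K * r ^ (-(β / 2))) + A * (K * r ^ (-(β / 2)))) *
          ∫ v, (1 - r / s) * (k * heatKernel k r (x - v) + A * heatKernel k (2 * s) (x - v)) :=
        ((hpot_r.add hpot_s).const_mul hfactor).rieszEnergy_le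
          ((hint_r.add hint_s).const_mul _) (by positivity) (fun _ ↦ abs_nonneg _)
          fun v ↦ abs_heatKernel_sub_le hr hrs (x - v)
    _ = K * (k + A) ^ 2 * ((1 - r / s) ^ 2 * r ^ (-(β / 2))) := by
        rw [integral_const_mul, integral_add hint_r hint_s, integral_const_mul, integral_const_mul,
          integral_sub_left_eq_self (heatKernel k r), integral_sub_left_eq_self (heatKernel k _),
          integral_heatKernel hr, integral_heatKernel hs]
        ring

end HeatRieszPotential

section TimeIntegral

variable {p δ : ℝ}

lemma integrableOn_Ioc_div_add_sq_mul_rpow_and_integral_le (hp : p < 1) (hδ : 0 < δ) :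
    IntegrableOn (fun r ↦ (δ / (r + δ)) ^ 2 * r ^ (-p)) (Set.Ioc 0 δ) ∧
      ∫ r in Set.Ioc 0 δ, (δ / (r + δ)) ^ 2 * r ^ (-p) ≤ δ ^ (1 - p) / (1 - p) := by
  have hdom : IntegrableOn (fun r : ℝ ↦ r ^ (-p)) (Set.Ioc 0 δ) :=
    (intervalIntegrable_iff_integrableOn_Ioc_of_le hδ.le).1
      (intervalIntegral.intervalIntegrable_rpow' (by linarith))
  have hle : ∀ r ∈ Set.Ioc 0 δ, (δ / (r + δ)) ^ 2 * r ^ (-p) ≤ r ^ (-p) := fun r hr ↦ by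
    have hr₀ : 0 < r := hr.1
    have hratio : δ / (r + δ) ≤ 1 := (div_le_one (by positivity)).2 (by linarith)
    exact mul_le_of_le_one_left (by positivity) (pow_le_one₀ (by positivity) hratio)
  have hint : IntegrableOn (fun r ↦ (δ / (r + δ)) ^ 2 * r ^ (-p)) (Set.Ioc 0 δ) := by
    refine hdom.mono' (by fun_prop) ((ae_restrict_iff' measurableSet_Ioc).2 (.of_forall ?_))
    intro r hr
    rw [norm_of_nonneg (mul_nonneg (sq_nonneg _) (rpow_nonneg hr.1.le _))]
    exact hle r hr
  refine ⟨hint, (setIntegral_mono_on hint hdom measurableSet_Ioc hle).trans_eq ?_⟩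
  rw [← intervalIntegral.integral_of_le hδ.le, integral_rpow (.inl (by linarith)),
    zero_rpow (by linarith), sub_zero, neg_add_eq_sub]

lemma integrableOn_Ioi_div_add_sq_mul_rpow_and_integral_le (hp : -1 < p) (hδ : 0 < δ) :
    IntegrableOn (fun r ↦ (δ / (r + δ)) ^ 2 * r ^ (-p)) (Set.Ioi δ) ∧
      ∫ r in Set.Ioi δ, (δ / (r + δ)) ^ 2 * r ^ (-p) ≤ δ ^ (1 - p) / (1 + p) := by
  have hdom : IntegrableOn (fun r : ℝ ↦ δ ^ 2 * r ^ (-2 - p)) (Set.Ioi δ) :=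
    (integrableOn_Ioi_rpow_of_lt (by linarith) hδ).const_mul _
  have hle : ∀ r ∈ Set.Ioi δ, (δ / (r + δ)) ^ 2 * r ^ (-p) ≤ δ ^ 2 * r ^ (-2 - p) := fun r hr ↦ by
    have hr₀ : 0 < r := hδ.trans hr
    calc (δ / (r + δ)) ^ 2 * r ^ (-p) ≤ (δ / r) ^ 2 * r ^ (-p) := by gcongr; linarith
      _ = δ ^ 2 * r ^ (-2 - p) := by
        rw [sub_eq_add_neg, rpow_add hr₀, rpow_neg hr₀.le 2, rpow_two, div_pow]
        ring
  have hint : IntegrableOn (fun r ↦ (δ / (r + δ)) ^ 2 * r ^ (-p)) (Set.Ioi δ) := by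
    refine hdom.mono' (by fun_prop) ((ae_restrict_iff' measurableSet_Ioi).2 (.of_forall ?_))
    intro r hr
    rw [norm_of_nonneg (mul_nonneg (sq_nonneg _) (rpow_nonneg (hδ.trans hr).le _))]
    exact hle r hr
  refine ⟨hint, (setIntegral_mono_on hint hdom measurableSet_Ioi hle).trans_eq ?_⟩
  have hpow : δ ^ (1 - p) = δ ^ 2 * δ ^ (-2 - p + 1) := by
    rw [← rpow_two, ← rpow_add hδ]
    ring_nf
  rw [integral_const_mul, integral_Ioi_rpow_of_lt (by linarith) hδ, hpow,
    show -2 - p + 1 = -(1 + p) by ring, neg_div_neg_eq, mul_div_assoc]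

lemma integrableOn_Ioi_zero_div_add_sq_mul_rpow_and_integral_le (hp : -1 < p) (hp' : p < 1)
    (hδ : 0 < δ) :
    IntegrableOn (fun r ↦ (δ / (r + δ)) ^ 2 * r ^ (-p)) (Set.Ioi 0) ∧
      ∫ r in Set.Ioi 0, (δ / (r + δ)) ^ 2 * r ^ (-p) ≤
        (1 / (1 - p) + 1 / (1 + p)) * δ ^ (1 - p) := by
  obtain ⟨hnear, hnear_le⟩ := integrableOn_Ioc_div_add_sq_mul_rpow_and_integral_le hp' hδ
  obtain ⟨hfar, hfar_le⟩ := integrableOn_Ioi_div_add_sq_mul_rpow_and_integral_le hp hδ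
  rw [← Set.Ioc_union_Ioi_eq_Ioi hδ.le]
  refine ⟨hnear.union hfar, ?_⟩
  rw [setIntegral_union (Set.Ioc_disjoint_Ioi le_rfl) measurableSet_Ioi hnear hfar]
  linarith [one_div_mul_eq_div (1 - p) (δ ^ (1 - p)), one_div_mul_eq_div (1 + p) (δ ^ (1 - p))]

lemma setIntegral_Ioo_le_of_le_div_add_sq_mul_rpow (hp : -1 < p) (hp' : p < 1) (hδ : 0 < δ)
    {F : ℝ → ℝ} {A : ℝ} (hA : 0 ≤ A) (hF : ∀ r, 0 < r → 0 ≤ F r)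
    (hF_le : ∀ r, 0 < r → F r ≤ A * ((δ / (r + δ)) ^ 2 * r ^ (-p))) (t : ℝ) :
    ∫ r in Set.Ioo 0 t, F r ≤ A * (1 / (1 - p) + 1 / (1 + p)) * δ ^ (1 - p) := by
  obtain ⟨hint, hint_le⟩ := integrableOn_Ioi_zero_div_add_sq_mul_rpow_and_integral_le hp hp' hδ
  have hdom : IntegrableOn (fun r ↦ A * ((δ / (r + δ)) ^ 2 * r ^ (-p))) (Set.Ioi 0) :=
    hint.const_mul A
  calc ∫ r in Set.Ioo 0 t, F r
      ≤ ∫ r in Set.Ioo 0 t, A * ((δ / (r + δ)) ^ 2 * r ^ (-p)) := by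
        refine integral_mono_of_nonneg ?_ (hdom.mono_set Set.Ioo_subset_Ioi_self) ?_ <;>
          filter_upwards [ae_restrict_mem measurableSet_Ioo] with r hr
        exacts [hF r hr.1, hF_le r hr.1]
    _ ≤ ∫ r in Set.Ioi 0, A * ((δ / (r + δ)) ^ 2 * r ^ (-p)) := by
        refine setIntegral_mono_set hdom ?_ Set.Ioo_subset_Ioi_self.eventuallyLE
        filter_upwards [ae_restrict_mem measurableSet_Ioi] with r hr
        exact (hF r hr).trans (hF_le r hr)
    _ = A * ∫ r in Set.Ioi 0, (δ / (r + δ)) ^ 2 * r ^ (-p) := integral_const_mul _ _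
    _ ≤ A * (1 / (1 - p) + 1 / (1 + p)) * δ ^ (1 - p) := by
        rw [mul_assoc]
        exact mul_le_mul_of_nonneg_left hint_le hA

end TimeIntegral

theorem stmt_11 (k : ℕ) (hk : 1 ≤ k) (β : ℝ) (hβ : 0 < β) (hβ2 : β < min 2 (k : ℝ)) :
    ∃ C : ℝ, 0 < C ∧
      ∀ t δ : ℝ, 0 ≤ t → 0 ≤ δ → ∀ x : EuclideanSpace ℝ (Fin k),
        (∫ r in Set.Ioo (0:ℝ) t, ∫ z : EuclideanSpace ℝ (Fin k),
            ∫ v : EuclideanSpace ℝ (Fin k),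
              ‖z - v‖ ^ (-β) * |heatKernel k (r + δ) (x - z) - heatKernel k r (x - z)| *
                |heatKernel k (r + δ) (x - v) - heatKernel k r (x - v)|) ≤
          C * δ ^ ((2 - β) / 2) := by
  obtain ⟨hβ_two, hβk⟩ := lt_min_iff.1 hβ2
  obtain ⟨K, hK, hpot⟩ := exists_rieszPotentialLE_heatKernel hβ.le hβk
  have hβ_half : 0 < 1 - β / 2 := by linarith
  refine ⟨K * (k + 2 * 2 ^ ((k : ℝ) / 2)) ^ 2 * (1 / (1 - β / 2) + 1 / (1 + β / 2)),
    by positivity, fun t δ _ hδ x ↦ ?_⟩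
  rcases hδ.eq_or_lt with rfl | hδ
  · simp only [add_zero, sub_self, abs_zero, mul_zero, integral_zero]
    positivity
  rw [sub_div, div_self two_ne_zero]
  refine setIntegral_Ioo_le_of_le_div_add_sq_mul_rpow (by linarith) (by linarith) hδ
    (by positivity) (fun r _ ↦ rieszEnergy_nonneg fun _ ↦ abs_nonneg _) (fun r hr ↦ ?_) t
  have hratio : δ / (r + δ) = 1 - r / (r + δ) := by field_simp; ring
  rw [hratio]
  exact rieszEnergy_heatKernel_sub_le hβ.le hK.le (fun a ha ↦ hpot a ha x) hr (by linarith)
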